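/- Let A be a reduced commutative ring, let C be a commutative ring extension of A that is an essential extension of A, and let B be an intermediate ring, A ⊆ B ⊆ C, such that B is integral over A. Then B is an essential extension of A. -/

import Mathlib

/-- Let `A` be a reduced commutative ring, let `C` be a commutative ring
extension of `A` that is an essential extension of `A`, and let `B` be an intermediate
ring, `A ⊆ B ⊆ C`, such that `B` is integral over `A`. Then `B` is an essential
extension of `A`.

Essential extension is formulated ideal-theoretically: every nonzero ideal meets the
subring nontrivially. Integrality of an element is formulated as satisfying a monic
polynomial all of whose coefficients lie in the subring. -/
theorem stmt_0 {C : Type*} [CommRing C] (A B : Subring C) (hAB : A ≤ B)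
    (hred : IsReduced A)
    (hess : ∀ I : Ideal C, I ≠ ⊥ → ∃ x ∈ I, x ∈ A ∧ x ≠ 0)
    (hint : ∀ b ∈ B, ∃ p : Polynomial C, p.Monic ∧ (∀ n, p.coeff n ∈ A) ∧
      Polynomial.eval b p = 0) :
    ∀ I : Ideal B, I ≠ ⊥ → ∃ x : B, x ∈ I ∧ (x : C) ∈ A ∧ x ≠ 0 := by
  intro I hI
  obtain ⟨b, hbI, hb0⟩ := Submodule.exists_mem_ne_zero_of_ne_bot hI
  by_contra hcon
  push Not at hcon
  have hb0' : (b : C) ≠ 0 := fun h => hb0 (Subtype.ext h)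
  obtain ⟨a, haI, haA, ha0⟩ := hess (Ideal.span {(b : C)}) (by
    intro h
    exact hb0' (Ideal.span_singleton_eq_bot.mp h))
  obtain ⟨c, hc⟩ := Ideal.mem_span_singleton'.mp haI
  have key : ∀ n : ℕ, ∀ k : ℕ, ∀ q : Polynomial C, q.natDegree = n → q.Monic →
      (∀ m, q.coeff m ∈ A) → a ^ k * q.eval (b : C) = 0 → False := by
    intro n
    induction n with
    | zero =>
      intro k q hn hq _ h
      rw [hq.natDegree_eq_zero.mp hn, Polynomial.eval_one, mul_one] at h
      have h2 : (⟨a, haA⟩ : A) ^ k = 0 := Subtype.ext (by simpa using h)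
      have h3 := eq_zero_of_pow_eq_zero h2
      exact ha0 (congrArg Subtype.val h3)
    | succ n ih =>
      intro k q hn hq hA h
      have hd : q.divX.natDegree = n := by
        rw [Polynomial.natDegree_divX_eq_natDegree_tsub_one, hn]; rfl
      have hdA : ∀ m, q.divX.coeff m ∈ A := by
        intro m; rw [Polynomial.coeff_divX]; exact hA _
      have hdm : q.divX.Monic := by
        unfold Polynomial.Monic Polynomial.leadingCoeff
        rw [hd, Polynomial.coeff_divX, ← hn]; exact hq
      have hdB : q.divX.eval (b : C) ∈ B := by
        rw [Polynomial.eval_eq_sum_range]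
        exact B.sum_mem fun i _ => B.mul_mem (hAB (hdA i)) (B.pow_mem b.2 i)
      have he : q.eval (b : C) = q.divX.eval (b : C) * b + q.coeff 0 := by
        conv_lhs => rw [← Polynomial.divX_mul_X_add q]
        simp
      have hx : a ^ k * q.coeff 0 ∈ A := A.mul_mem (A.pow_mem haA k) (hA 0)
      have hz : a ^ k * q.coeff 0 = 0 := by
        have h1 := hcon ⟨a ^ k * q.coeff 0, hAB hx⟩ (by
          have : (⟨a ^ k * q.coeff 0, hAB hx⟩ : B)
              = (-(⟨a, hAB haA⟩ ^ k * ⟨q.divX.eval (b : C), hdB⟩)) * b := by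
            apply Subtype.ext
            push_cast
            rw [he] at h
            linear_combination h
          rw [this]
          exact I.mul_mem_left _ hbI) hx
        exact congrArg Subtype.val h1
      refine ih (k + 1) q.divX hd hdm hdA ?_
      rw [he] at h
      rw [pow_succ]
      linear_combination c * h - c * hz - a ^ k * q.divX.eval (b : C) * hc
  obtain ⟨p, hp, hpA, hpe⟩ := hint b b.2
  exact key _ 0 p rfl hp hpA (by rw [hpe, mul_zero])
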